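/- Let J ⊆ ℝ be a compact interval and let f_1, …, f_n : ℝ → ℝ be C^{1+ε} orientation-preserving bijections (each f_j' is positive, Hölder continuous with some exponent ε > 0, and satisfies f_j'(x) ≤ λ_max for some constant λ_max < 1) with f_j(J) ⊆ J for all j, let p̄ be a probability vector with p_j > 0, and let μ be a Borel probability measure with μ = ∑_j p_j (f_j)_*μ. Suppose there exist α > 0, r > 0, θ > 0, and a function ψ : ℝ → ℝ vanishing outside the closed r-neighbourhood B_r(J) with θ ≤ ψ(x) ≤ θ^{-1} for all x ∈ B_r(J), such that for every x ∈ B_r(J) one has ∑_j p_j ((f_j^{-1})'(x))^{α} ψ(f_j^{-1}(x)) < ψ(x). Then μ is α-regular: there exists C > 0 such that μ(B_ρ(x)) ≤ C ρ^{α} for every x ∈ ℝ and every ρ > 0. -/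

import Mathlib

open MeasureTheory
open scoped ENNReal

/-!
Bounded distortion turns the hypothesis on `ψ` into an estimate for all small sets. If `S` has
diameter `ℓ`, contains `x` and meets `J`, then `ℓ' = diam (f j ⁻¹' S)` satisfies
`ℓ' ≤ |((f j)⁻¹)' x| * ℓ * exp (B * ℓ' ^ ε)`. The error factor is absorbed by replacing `ℓ ^ α`
with `ℓ ^ α * exp (-A * ℓ ^ ε)`: since `ℓ ≤ lam * ℓ'`, the choice `A = α * B / (1 - lam ^ ε)`
makes the errors accumulated along all scales telescope. Stationarity and the inequality
`∑ j, p j * |((f j)⁻¹)' x| ^ α * ψ ((f j)⁻¹ x) ≤ ψ x` then propagate the estimate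
`μ S ≤ C * ℓ ^ α * exp (-A * ℓ ^ ε) * ψ x` from sets of diameter at least `δ * lam ^ k` to sets of
diameter at least `δ * lam ^ (k + 1)`.
-/

open Set Metric Function
open scoped NNReal Topology

/-- Stationary measures of the iterated function scheme applying `f j` with probability `p j`. -/
def IsStationaryMeasure {ι X : Type*} [Fintype ι] [MeasurableSpace X] (p : ι → ℝ)
    (f : ι → X → X) (μ : Measure X) : Prop :=
  μ = ∑ j, ENNReal.ofReal (p j) • μ.map (f j)

/-- `α`-regular measures: the mass of a ball is at most a constant times its radius to the power
`α`. -/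
def IsAlphaRegular {X : Type*} [PseudoMetricSpace X] [MeasurableSpace X] (μ : Measure X)
    (α : ℝ) : Prop :=
  ∃ C : ℝ, 0 < C ∧ ∀ (x : X) (ρ : ℝ), 0 < ρ → μ (closedBall x ρ) ≤ ENNReal.ofReal (C * ρ ^ α)

lemma isAlphaRegular_of_forall_le {X : Type*} [PseudoMetricSpace X] [MeasurableSpace X]
    {μ : Measure X} [IsFiniteMeasure μ] {α ρ₀ C : ℝ} (hα : 0 ≤ α) (hρ₀ : 0 < ρ₀)
    (hC : ∀ x ρ, 0 < ρ → ρ ≤ ρ₀ → μ.real (closedBall x ρ) ≤ C * ρ ^ α) : IsAlphaRegular μ α := by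
  refine ⟨|C| + μ.real univ / ρ₀ ^ α + 1, by positivity, fun x ρ hρ => ?_⟩
  rw [← ofReal_measureReal]
  refine ENNReal.ofReal_le_ofReal ?_
  rcases le_total ρ ρ₀ with hρρ₀ | hρ₀ρ
  · refine (hC x ρ hρ hρρ₀).trans ?_
    gcongr
    have : 0 ≤ μ.real univ / ρ₀ ^ α := by positivity
    linarith [le_abs_self C]
  · calc μ.real (closedBall x ρ) ≤ μ.real univ := measureReal_mono (subset_univ _)
      _ = μ.real univ / ρ₀ ^ α * ρ₀ ^ α := by field_simp
      _ ≤ (|C| + μ.real univ / ρ₀ ^ α + 1) * ρ ^ α := by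
          gcongr
          linarith [abs_nonneg C]

/-- The asymmetric diffusion operator `D^{(1)}_{α,T}`, written in terms of the inverse branches
`g j` and of their local scaling factors `s j`, which are `|(g j)'|` on the line. -/
noncomputable def asymmetricDiffusion {ι X : Type*} [Fintype ι] (p : ι → ℝ) (g : ι → X → X)
    (s : ι → X → ℝ) (α : ℝ) (ψ : X → ℝ) (x : X) : ℝ :=
  ∑ j, p j * s j x ^ α * ψ (g j x)

/-- The function `ℓ ↦ ℓ ^ α * exp (-A * ℓ ^ ε)`, a substitute for `ℓ ^ α` whose exponential
correction absorbs the distortion errors. -/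
noncomputable def distortionGauge (A ε α ℓ : ℝ) : ℝ :=
  ℓ ^ α * Real.exp (-A * ℓ ^ ε)

/-- An iterated function scheme of `lam`-Lipschitz bijections `f j` whose inverses `g j` are
`κ`-Lipschitz on `K` and there scale distances by the factor `s j`, up to a distortion controlled by
the `ε`-th power of the size of the image. -/
structure HasBoundedDistortion {ι X : Type*} [PseudoMetricSpace X] (f g : ι → X → X)
    (s : ι → X → ℝ) (K : Set X) (lam κ : ℝ≥0) (B ε : ℝ) : Prop where
  leftInverse : ∀ j, LeftInverse (g j) (f j)
  rightInverse : ∀ j, RightInverse (g j) (f j)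
  lipschitzWith : ∀ j, LipschitzWith lam (f j)
  lipschitzOnWith_inv : ∀ j, LipschitzOnWith κ (g j) K
  scale_nonneg : ∀ j x, 0 ≤ s j x
  dist_inv_le : ∀ j, ∀ x ∈ K, ∀ y ∈ K, ∀ z ∈ K, ∀ D, dist (g j y) (g j x) ≤ D →
    dist (g j z) (g j x) ≤ D → dist (g j y) (g j z) ≤ s j x * dist y z * Real.exp (B * D ^ ε)

namespace IsStationaryMeasure

variable {ι X : Type*} [Fintype ι] [MeasurableSpace X] {p : ι → ℝ} {f : ι → X → X} {μ : Measure X}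

lemma lintegral_eq (hμ : IsStationaryMeasure p f μ) (hf : ∀ j, Measurable (f j)) {φ : X → ℝ≥0∞}
    (hφ : Measurable φ) :
    ∫⁻ x, φ x ∂μ = ∑ j, ENNReal.ofReal (p j) * ∫⁻ x, φ (f j x) ∂μ := by
  conv_lhs => rw [hμ]
  simp only [lintegral_finsetSum_measure, lintegral_smul_measure, lintegral_map hφ (hf _),
    smul_eq_mul]

lemma measureReal_eq [IsFiniteMeasure μ] (hμ : IsStationaryMeasure p f μ) (hp : ∀ j, 0 ≤ p j)
    (hf : ∀ j, Measurable (f j)) {S : Set X} (hS : MeasurableSet S) :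
    μ.real S = ∑ j, p j * μ.real (f j ⁻¹' S) := by
  have hμS : μ S = ∑ j, ENNReal.ofReal (p j) * μ (f j ⁻¹' S) := by
    conv_lhs => rw [hμ]
    simp only [Measure.coe_finsetSum, Finset.sum_apply, Measure.smul_apply, smul_eq_mul,
      Measure.map_apply (hf _) hS]
  rw [measureReal_def, hμS, ENNReal.toReal_sum fun j _ => by finiteness]
  simp only [ENNReal.toReal_mul, ENNReal.toReal_ofReal (hp _), measureReal_def]

lemma measureReal_le_of_preimage [IsFiniteMeasure μ] {g : ι → X → X} {s : ι → X → ℝ} {α : ℝ}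
    {ψ : X → ℝ} (hμ : IsStationaryMeasure p f μ)
    (hp : ∀ j, 0 ≤ p j) (hf : ∀ j, Measurable (f j)) {S : Set X} (hS : MeasurableSet S) {c : ℝ}
    (hc : 0 ≤ c) {x : X} (hpre : ∀ j, μ.real (f j ⁻¹' S) ≤ c * (s j x ^ α * ψ (g j x)))
    (hcontr : asymmetricDiffusion p g s α ψ x ≤ ψ x) : μ.real S ≤ c * ψ x :=
  calc μ.real S = ∑ j, p j * μ.real (f j ⁻¹' S) := hμ.measureReal_eq hp hf hS
    _ ≤ ∑ j, p j * (c * (s j x ^ α * ψ (g j x))) := by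
        gcongr with j
        exacts [hp j, hpre j]
    _ = c * asymmetricDiffusion p g s α ψ x := by
        rw [asymmetricDiffusion, Finset.mul_sum]
        exact Finset.sum_congr rfl fun j _ => by ring
    _ ≤ c * ψ x := by gcongr

/- Stationarity gives `∫ exp (-V) ≥ ∫ exp (-c V)`, while `exp (-V) ≤ exp (-c V)` pointwise. -/
lemma ae_eq_zero_of_comp_le_mul [IsFiniteMeasure μ] (hμ : IsStationaryMeasure p f μ)
    (hp : ∀ j, 0 ≤ p j) (hpsum : ∑ j, p j = 1) (hf : ∀ j, Measurable (f j)) {V : X → ℝ}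
    (hV : Measurable V) (hV0 : ∀ x, 0 ≤ V x) {c : ℝ} (hc : c < 1)
    (hVf : ∀ j x, V (f j x) ≤ c * V x) : ∀ᵐ x ∂μ, V x = 0 := by
  let φ : ℝ → ℝ≥0∞ := fun t => ENNReal.ofReal (Real.exp (-t))
  have hφ : Measurable φ := by fun_prop
  have hφ_anti : Antitone φ := fun s t hst =>
    ENNReal.ofReal_le_ofReal (Real.exp_le_exp.2 (neg_le_neg hst))
  have hle : ∀ x, φ (V x) ≤ φ (c * V x) := fun x =>
    hφ_anti (mul_le_of_le_one_left (hV0 x) hc.le)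
  have hfin : ∫⁻ x, φ (V x) ∂μ ≠ ∞ := by
    refine ne_top_of_le_ne_top (measure_ne_top μ univ) ?_
    calc ∫⁻ x, φ (V x) ∂μ ≤ ∫⁻ _, 1 ∂μ := lintegral_mono fun x => by simpa [φ] using hV0 x
      _ = μ univ := lintegral_one
  have hge : ∫⁻ x, φ (c * V x) ∂μ ≤ ∫⁻ x, φ (V x) ∂μ :=
    calc ∫⁻ x, φ (c * V x) ∂μ = ∑ j, ENNReal.ofReal (p j) * ∫⁻ x, φ (c * V x) ∂μ := by
          rw [← Finset.sum_mul, ← ENNReal.ofReal_sum_of_nonneg fun j _ => hp j, hpsum,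
            ENNReal.ofReal_one, one_mul]
      _ ≤ ∑ j, ENNReal.ofReal (p j) * ∫⁻ x, φ (V (f j x)) ∂μ := by
          gcongr with j _ x
          exact hφ_anti (hVf j x)
      _ = ∫⁻ x, φ (V x) ∂μ := (hμ.lintegral_eq hf (hφ.comp hV)).symm
  filter_upwards [ae_eq_of_ae_le_of_lintegral_le (.of_forall hle) hfin (by fun_prop) hge]
    with x hx
  have hVx : V x = c * V x := by
    simpa [φ, ENNReal.ofReal_eq_ofReal_iff, Real.exp_nonneg] using hx
  nlinarith [hV0 x]

end IsStationaryMeasure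

section Support

variable {ι X : Type*} [PseudoMetricSpace X] {lam : ℝ≥0} {J : Set X}

lemma infDist_apply_le_mul_infDist {f : X → X} (hf : LipschitzWith lam f) (hJne : J.Nonempty)
    (hmaps : MapsTo f J J) (x : X) : infDist (f x) J ≤ lam * infDist x J := by
  have hdist : ∀ y ∈ J, infDist (f x) J ≤ lam * dist x y := fun y hy =>
    (infDist_le_dist_of_mem (hmaps hy)).trans (hf.dist_le_mul x y)
  rcases eq_zero_or_pos lam with rfl | hlam
  · obtain ⟨y, hy⟩ := hJne
    simpa using hdist y hy
  · rw [← div_le_iff₀' (by exact_mod_cast hlam), le_infDist hJne]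
    exact fun y hy => (div_le_iff₀' (by exact_mod_cast hlam)).2 (hdist y hy)

lemma IsStationaryMeasure.measure_compl_eq_zero [Fintype ι] [MeasurableSpace X] [BorelSpace X]
    {p : ι → ℝ} {f : ι → X → X} {μ : Measure X} [IsFiniteMeasure μ]
    (hμ : IsStationaryMeasure p f μ) (hp : ∀ j, 0 ≤ p j) (hpsum : ∑ j, p j = 1)
    (hf : ∀ j, LipschitzWith lam (f j)) (hlam : lam < 1) (hJ : IsClosed J) (hJne : J.Nonempty)
    (hmaps : ∀ j, MapsTo (f j) J J) : μ Jᶜ = 0 := by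
  refine measure_mono_null (fun x hx => ?_) (hμ.ae_eq_zero_of_comp_le_mul hp hpsum
    (fun j => (hf j).continuous.measurable) (continuous_infDist_pt J).measurable
    (fun _ => infDist_nonneg) (NNReal.coe_lt_one.2 hlam)
    fun j => infDist_apply_le_mul_infDist (hf j) hJne (hmaps j))
  exact ((hJ.notMem_iff_infDist_pos hJne).1 hx).ne'

lemma measureReal_eq_zero_or_subset_cthickening [MeasurableSpace X] {μ : Measure X}
    (hμJ : μ Jᶜ = 0) {r : ℝ} {S : Set X} (hS : Bornology.IsBounded S) (hSr : diam S ≤ r) :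
    μ.real S = 0 ∨ S ⊆ cthickening r J := by
  rcases (S ∩ J).eq_empty_or_nonempty with hSJ | ⟨y, hyS, hyJ⟩
  · have hμS : μ S = 0 :=
      measure_mono_null (disjoint_iff_inter_eq_empty.2 hSJ).subset_compl_right hμJ
    exact .inl (by rw [measureReal_def, hμS, ENNReal.toReal_zero])
  · exact .inr fun x hx =>
      mem_cthickening_of_dist_le x y r J hyJ ((dist_le_diam_of_mem hS hx hyS).trans hSr)

end Support

section Gauge

variable {A B ε α s lam ℓ ℓ' r : ℝ}

lemma distortionGauge_nonneg (hℓ : 0 ≤ ℓ) : 0 ≤ distortionGauge A ε α ℓ :=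
  mul_nonneg (Real.rpow_nonneg hℓ α) (Real.exp_nonneg _)

lemma distortionGauge_le_rpow (hA : 0 ≤ A) (hℓ : 0 ≤ ℓ) : distortionGauge A ε α ℓ ≤ ℓ ^ α := by
  refine mul_le_of_le_one_right (Real.rpow_nonneg hℓ α) (Real.exp_le_one_iff.2 ?_)
  exact mul_nonpos_of_nonpos_of_nonneg (neg_nonpos.2 hA) (Real.rpow_nonneg hℓ ε)

lemma rpow_mul_exp_le_distortionGauge (hA : 0 ≤ A) (hε : 0 ≤ ε) (hα : 0 ≤ α) (hℓ : 0 ≤ ℓ)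
    (hle : ℓ ≤ ℓ') (hr : ℓ' ≤ r) :
    ℓ ^ α * Real.exp (-A * r ^ ε) ≤ distortionGauge A ε α ℓ' := by
  have hℓ' : 0 ≤ ℓ' := hℓ.trans hle
  unfold distortionGauge
  simp only [neg_mul]
  gcongr

lemma distortionGauge_le_mul (hA : 0 ≤ A) (hε : 0 ≤ ε) (hα : 0 ≤ α) (hs : 0 ≤ s) (hlam : 0 ≤ lam)
    (hℓ : 0 ≤ ℓ) (hℓ' : 0 ≤ ℓ') (hAB : α * B ≤ A * (1 - lam ^ ε)) (hle : ℓ ≤ lam * ℓ')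
    (hdist : ℓ' ≤ s * ℓ * Real.exp (B * ℓ' ^ ε)) :
    distortionGauge A ε α ℓ' ≤ s ^ α * distortionGauge A ε α ℓ := by
  have hpow : ℓ' ^ α ≤ s ^ α * ℓ ^ α * Real.exp (α * B * ℓ' ^ ε) := by
    refine (Real.rpow_le_rpow hℓ' hdist hα).trans_eq ?_
    rw [Real.mul_rpow (by positivity) (by positivity), Real.mul_rpow hs hℓ, ← Real.exp_mul]
    congr 2
    ring
  have hexponent : α * B * ℓ' ^ ε + -A * ℓ' ^ ε ≤ -A * ℓ ^ ε := by
    have hℓε : ℓ ^ ε ≤ lam ^ ε * ℓ' ^ ε :=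
      (Real.rpow_le_rpow hℓ hle hε).trans_eq (Real.mul_rpow hlam hℓ')
    linarith [mul_le_mul_of_nonneg_left hℓε hA,
      mul_le_mul_of_nonneg_right hAB (Real.rpow_nonneg hℓ' ε)]
  calc ℓ' ^ α * Real.exp (-A * ℓ' ^ ε)
      ≤ s ^ α * ℓ ^ α * Real.exp (α * B * ℓ' ^ ε) * Real.exp (-A * ℓ' ^ ε) := by gcongr
    _ = s ^ α * ℓ ^ α * Real.exp (α * B * ℓ' ^ ε + -A * ℓ' ^ ε) := by rw [Real.exp_add, mul_assoc]
    _ ≤ s ^ α * ℓ ^ α * Real.exp (-A * ℓ ^ ε) := by gcongr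
    _ = s ^ α * distortionGauge A ε α ℓ := mul_assoc _ _ _

end Gauge

namespace HasBoundedDistortion

variable {ι X : Type*} [PseudoMetricSpace X] {f g : ι → X → X} {s : ι → X → ℝ} {K S : Set X}
  {lam κ : ℝ≥0} {B ε : ℝ}

lemma preimage_eq_image_inv (h : HasBoundedDistortion f g s K lam κ B ε) (j : ι) (S : Set X) :
    f j ⁻¹' S = g j '' S :=
  (congrFun (image_eq_preimage_of_inverse (h.rightInverse j) (h.leftInverse j)) S).symm

lemma dist_le_of_mem_image_inv (h : HasBoundedDistortion f g s K lam κ B ε) (j : ι) (hSK : S ⊆ K)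
    (hS : Bornology.IsBounded S) :
    ∀ y ∈ g j '' S, ∀ z ∈ g j '' S, dist y z ≤ κ * diam S := by
  rintro _ ⟨y, hy, rfl⟩ _ ⟨z, hz, rfl⟩
  refine ((h.lipschitzOnWith_inv j).dist_le_mul y (hSK hy) z (hSK hz)).trans ?_
  gcongr
  exact dist_le_diam_of_mem hS hy hz

lemma isBounded_image_inv (h : HasBoundedDistortion f g s K lam κ B ε) (j : ι) (hSK : S ⊆ K)
    (hS : Bornology.IsBounded S) : Bornology.IsBounded (g j '' S) :=
  isBounded_iff.2 ⟨_, fun _ hy _ hz => h.dist_le_of_mem_image_inv j hSK hS _ hy _ hz⟩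

lemma diam_image_inv_le (h : HasBoundedDistortion f g s K lam κ B ε) (j : ι) (hSK : S ⊆ K)
    (hS : Bornology.IsBounded S) : diam (g j '' S) ≤ κ * diam S :=
  diam_le_of_forall_dist_le (by positivity) (h.dist_le_of_mem_image_inv j hSK hS)

lemma diam_le_mul_diam_image_inv (h : HasBoundedDistortion f g s K lam κ B ε) (j : ι)
    (hSK : S ⊆ K) (hS : Bornology.IsBounded S) : diam S ≤ lam * diam (g j '' S) := by
  have := (h.lipschitzWith j).diam_image_le _ (h.isBounded_image_inv j hSK hS)
  rwa [(h.rightInverse j).image_image] at this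

lemma diam_image_inv_le_mul_exp (h : HasBoundedDistortion f g s K lam κ B ε) (j : ι)
    (hSK : S ⊆ K) (hS : Bornology.IsBounded S) {x : X} (hx : x ∈ S) :
    diam (g j '' S) ≤ s j x * diam S * Real.exp (B * diam (g j '' S) ^ ε) := by
  have hs := h.scale_nonneg j x
  have hbdd := h.isBounded_image_inv j hSK hS
  have hdist : ∀ y ∈ S, dist (g j y) (g j x) ≤ diam (g j '' S) := fun y hy =>
    dist_le_diam_of_mem hbdd (mem_image_of_mem _ hy) (mem_image_of_mem _ hx)
  refine diam_le_of_forall_dist_le (by positivity) ?_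
  rintro _ ⟨y, hy, rfl⟩ _ ⟨z, hz, rfl⟩
  refine (h.dist_inv_le j x (hSK hx) y (hSK hy) z (hSK hz) _ (hdist y hy) (hdist z hz)).trans ?_
  gcongr
  exact dist_le_diam_of_mem hS hy hz

lemma distortionGauge_diam_image_inv_le (h : HasBoundedDistortion f g s K lam κ B ε) {A α : ℝ}
    (hA : 0 ≤ A) (hε : 0 ≤ ε) (hα : 0 ≤ α) (hAB : α * B ≤ A * (1 - lam ^ ε)) (j : ι) (hSK : S ⊆ K)
    (hS : Bornology.IsBounded S) {x : X} (hx : x ∈ S) :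
    distortionGauge A ε α (diam (g j '' S)) ≤ s j x ^ α * distortionGauge A ε α (diam S) :=
  distortionGauge_le_mul hA hε hα (h.scale_nonneg j x) lam.coe_nonneg diam_nonneg diam_nonneg hAB
    (h.diam_le_mul_diam_image_inv j hSK hS) (h.diam_image_inv_le_mul_exp j hSK hS hx)

end HasBoundedDistortion

section Regularity

variable {ι X : Type*} [Fintype ι] [PseudoMetricSpace X] [MeasurableSpace X] [BorelSpace X]
  {p : ι → ℝ} {f g : ι → X → X} {s : ι → X → ℝ} {μ : Measure X} [IsFiniteMeasure μ] {J K : Set X}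
  {lam κ : ℝ≥0} {A B C α δ ε θ r : ℝ} {ψ : X → ℝ}

lemma exists_le_mul_distortionGauge (hδ : 0 < δ) (hε : 0 ≤ ε) (hα : 0 ≤ α) (hA : 0 ≤ A)
    (hθ : 0 < θ) (M : ℝ) :
    ∃ C, 0 ≤ C ∧ ∀ ℓ t, δ ≤ ℓ → ℓ ≤ r → θ ≤ t → M ≤ C * distortionGauge A ε α ℓ * t := by
  refine ⟨|M| / (δ ^ α * Real.exp (-A * r ^ ε) * θ), by positivity, fun ℓ t hδℓ hℓr hθt => ?_⟩
  calc M ≤ |M| := le_abs_self M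
    _ = |M| / (δ ^ α * Real.exp (-A * r ^ ε) * θ) * (δ ^ α * Real.exp (-A * r ^ ε)) * θ := by
        field_simp
    _ ≤ |M| / (δ ^ α * Real.exp (-A * r ^ ε) * θ) * distortionGauge A ε α ℓ * t := by
        have := distortionGauge_nonneg (A := A) (ε := ε) (α := α) (hδ.le.trans hδℓ)
        gcongr
        exact rpow_mul_exp_le_distortionGauge hA hε hα hδ.le hδℓ hℓr

lemma HasBoundedDistortion.measureReal_le_of_image_inv
    (h : HasBoundedDistortion f g s K lam κ B ε) (hμ : IsStationaryMeasure p f μ)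
    (hp : ∀ j, 0 ≤ p j) (hε : 0 ≤ ε) (hα : 0 ≤ α) (hA : 0 ≤ A) (hAB : α * B ≤ A * (1 - lam ^ ε))
    (hC : 0 ≤ C) (hψ : ∀ x, 0 ≤ ψ x) {S : Set X} (hSm : MeasurableSet S)
    (hSb : Bornology.IsBounded S) (hSK : S ⊆ K) {x : X} (hxS : x ∈ S)
    (hcontr : asymmetricDiffusion p g s α ψ x ≤ ψ x)
    (himage : ∀ j, μ.real (g j '' S) ≤
      C * distortionGauge A ε α (diam (g j '' S)) * ψ (g j x)) :
    μ.real S ≤ C * distortionGauge A ε α (diam S) * ψ x := by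
  refine hμ.measureReal_le_of_preimage hp (fun j => (h.lipschitzWith j).continuous.measurable) hSm
    (mul_nonneg hC (distortionGauge_nonneg diam_nonneg)) (fun j => ?_) hcontr
  calc μ.real (f j ⁻¹' S) = μ.real (g j '' S) := by rw [h.preimage_eq_image_inv j S]
    _ ≤ C * distortionGauge A ε α (diam (g j '' S)) * ψ (g j x) := himage j
    _ ≤ C * (s j x ^ α * distortionGauge A ε α (diam S)) * ψ (g j x) := by
        gcongr
        · exact hψ _
        · exact h.distortionGauge_diam_image_inv_le hA hε hα hAB j hSK hSb hxS
    _ = C * distortionGauge A ε α (diam S) * (s j x ^ α * ψ (g j x)) := by ring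

lemma HasBoundedDistortion.measureReal_le_mul_distortionGauge
    (h : HasBoundedDistortion f g s (cthickening r J) lam κ B ε) (hμ : IsStationaryMeasure p f μ)
    (hp : ∀ j, 0 ≤ p j) (hμJ : μ Jᶜ = 0) (hε : 0 ≤ ε) (hα : 0 ≤ α) (hA : 0 ≤ A)
    (hAB : α * B ≤ A * (1 - lam ^ ε)) (hδr : κ * δ ≤ r) (hC : 0 ≤ C) (hψ : ∀ x, 0 ≤ ψ x)
    (hcontr : ∀ x ∈ cthickening r J, asymmetricDiffusion p g s α ψ x ≤ ψ x)
    (hlarge : ∀ S, ∀ x ∈ cthickening r J, δ ≤ diam S → diam S ≤ r →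
      μ.real S ≤ C * distortionGauge A ε α (diam S) * ψ x)
    (k : ℕ) {S : Set X} {x : X} (hxS : x ∈ S) (hSm : MeasurableSet S)
    (hSb : Bornology.IsBounded S) (hS0 : 0 < diam S) (hSk : δ * lam ^ k ≤ diam S)
    (hSr : diam S ≤ r) :
    μ.real S ≤ C * distortionGauge A ε α (diam S) * ψ x := by
  have hnull : ∀ {T : Set X} {y : X}, μ.real T = 0 →
      μ.real T ≤ C * distortionGauge A ε α (diam T) * ψ y := fun hT =>
    hT.trans_le (mul_nonneg (mul_nonneg hC (distortionGauge_nonneg diam_nonneg)) (hψ _))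
  induction k generalizing S x with
  | zero =>
    rcases measureReal_eq_zero_or_subset_cthickening hμJ hSb hSr with hS | hSK
    · exact hnull hS
    · exact hlarge S x (hSK hxS) (by simpa using hSk) hSr
  | succ k ih =>
    rcases measureReal_eq_zero_or_subset_cthickening hμJ hSb hSr with hS | hSK
    · exact hnull hS
    rcases le_total δ (diam S) with hδS | hSδ
    · exact hlarge S x (hSK hxS) hδS hSr
    refine h.measureReal_le_of_image_inv hμ hp hε hα hA hAB hC hψ hSm hSb hSK hxS
      (hcontr x (hSK hxS)) fun j => ?_
    have hdiam : diam S ≤ lam * diam (g j '' S) := h.diam_le_mul_diam_image_inv j hSK hSb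
    have hlam : (0 : ℝ) < lam := pos_of_mul_pos_left (hS0.trans_le hdiam) diam_nonneg
    refine ih (mem_image_of_mem _ hxS) ?_ (h.isBounded_image_inv j hSK hSb)
      (pos_of_mul_pos_right (hS0.trans_le hdiam) hlam.le) ?_ ?_
    · rw [← h.preimage_eq_image_inv j S]
      exact (h.lipschitzWith j).continuous.measurable hSm
    · refine le_of_mul_le_mul_left (le_trans (le_of_eq ?_) (hSk.trans hdiam)) hlam
      ring
    · exact (h.diam_image_inv_le j hSK hSb).trans (le_trans (by gcongr) hδr)

theorem HasBoundedDistortion.exists_measureReal_le_mul_diam_rpow {M : ℝ}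
    (h : HasBoundedDistortion f g s (cthickening r J) lam κ B ε) (hlam : lam < 1) (hB : 0 ≤ B)
    (hε : 0 < ε) (hJ : IsClosed J) (hJne : J.Nonempty) (hmaps : ∀ j, MapsTo (f j) J J)
    (hp : ∀ j, 0 ≤ p j) (hpsum : ∑ j, p j = 1) (hμ : IsStationaryMeasure p f μ) (hα : 0 ≤ α)
    (hr : 0 < r) (hθ : 0 < θ) (hψ : ∀ x, 0 ≤ ψ x)
    (hψb : ∀ x ∈ cthickening r J, θ ≤ ψ x ∧ ψ x ≤ M)
    (hcontr : ∀ x ∈ cthickening r J, asymmetricDiffusion p g s α ψ x ≤ ψ x) :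
    ∃ C, ∀ S, MeasurableSet S → Bornology.IsBounded S → 0 < diam S → diam S ≤ r →
      μ.real S ≤ C * diam S ^ α := by
  have hμJ : μ Jᶜ = 0 :=
    hμ.measure_compl_eq_zero hp hpsum h.lipschitzWith hlam hJ hJne hmaps
  have hlamε : 0 < 1 - (lam : ℝ) ^ ε := sub_pos.2 (Real.rpow_lt_one lam.coe_nonneg hlam hε)
  obtain ⟨A, hA, hAB⟩ : ∃ A, 0 ≤ A ∧ α * B ≤ A * (1 - lam ^ ε) :=
    ⟨α * B / (1 - lam ^ ε), by positivity, (div_mul_cancel₀ _ hlamε.ne').ge⟩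
  obtain ⟨δ, hδ, hδr⟩ : ∃ δ, 0 < δ ∧ κ * δ ≤ r := by
    refine ⟨r / (κ + 1), by positivity, ?_⟩
    rw [mul_div_assoc', div_le_iff₀ (by positivity)]
    nlinarith
  obtain ⟨C, hC, hCgauge⟩ :=
    exists_le_mul_distortionGauge (r := r) hδ hε.le hα hA hθ (μ.real univ)
  refine ⟨C * |M|, fun S hSm hSb hS0 hSr => ?_⟩
  rcases measureReal_eq_zero_or_subset_cthickening hμJ hSb hSr with hS | hSK
  · exact hS.trans_le (by positivity)
  obtain ⟨x, hxS⟩ : S.Nonempty := nonempty_iff_ne_empty.2 fun hS => by simp [hS] at hS0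
  obtain ⟨k, hk⟩ := exists_pow_lt_of_lt_one (div_pos hS0 hδ) (NNReal.coe_lt_one.2 hlam)
  calc μ.real S ≤ C * distortionGauge A ε α (diam S) * ψ x :=
        h.measureReal_le_mul_distortionGauge hμ hp hμJ hε.le hα hA hAB hδr hC hψ hcontr
          (fun T y hy hδT hTr => (measureReal_mono (subset_univ T)).trans
            (hCgauge _ _ hδT hTr (hψb y hy).1)) k hxS hSm hSb hS0 ((lt_div_iff₀' hδ).1 hk).le hSr
    _ ≤ C * diam S ^ α * |M| := by
        gcongr
        · exact hψ x
        · exact distortionGauge_le_rpow hA diam_nonneg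
        · exact (hψb x (hSK hxS)).2.trans (le_abs_self M)
    _ = C * |M| * diam S ^ α := by ring

end Regularity

section RealLine

variable {f f' : ℝ → ℝ} {K : Set ℝ} {ε lam m Ch : ℝ}

lemma exists_abs_sub_eq_abs_deriv_mul (hderiv : ∀ x, HasDerivAt f (f' x) x) (x y : ℝ) :
    ∃ ξ ∈ uIcc x y, |f x - f y| = |f' ξ| * |x - y| := by
  wlog hxy : x < y generalizing x y
  · rcases (not_lt.1 hxy).eq_or_lt with rfl | hyx
    · exact ⟨y, left_mem_uIcc, by simp⟩
    · simpa only [uIcc_comm, abs_sub_comm] using this y x hyx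
  obtain ⟨ξ, hξ, hslope⟩ := exists_hasDerivAt_eq_slope f f' hxy
    (fun z _ => (hderiv z).continuousAt.continuousWithinAt) fun z _ => hderiv z
  refine ⟨ξ, Icc_subset_uIcc (Ioo_subset_Icc_self hξ), ?_⟩
  rw [abs_sub_comm, abs_sub_comm x, ← abs_mul, hslope, div_mul_cancel₀ _ (sub_pos.2 hxy).ne']

lemma lipschitzWith_toNNReal_of_abs_deriv_le (hderiv : ∀ x, HasDerivAt f (f' x) x)
    (hle : ∀ x, |f' x| ≤ lam) : LipschitzWith lam.toNNReal f :=
  lipschitzWith_of_nnnorm_deriv_le (fun x => (hderiv x).differentiableAt) fun x => by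
    simpa [(hderiv x).deriv, ← norm_toNNReal] using Real.toNNReal_le_toNNReal (hle x)

lemma continuous_of_dist_le_mul_rpow {X Y : Type*} [PseudoMetricSpace X] [PseudoMetricSpace Y]
    {h : X → Y} (hε : 0 < ε) (hh : ∀ x y, dist (h x) (h y) ≤ Ch * dist x y ^ ε) :
    Continuous h := by
  refine continuous_iff_continuousAt.2 fun x => tendsto_iff_dist_tendsto_zero.2 ?_
  refine squeeze_zero (fun _ => dist_nonneg) (fun y => hh y x) ?_
  have hcont : Continuous fun y => Ch * dist y x ^ ε := by fun_prop (disch := positivity)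
  simpa [Real.zero_rpow hε.ne'] using hcont.tendsto x

lemma continuous_invFun_of_isOpenMap {X Y : Type*} [TopologicalSpace X] [TopologicalSpace Y]
    [Nonempty X] {h : X → Y} (hbij : Bijective h) (hopen : IsOpenMap h) :
    Continuous (invFun h) := by
  refine continuous_def.2 fun U hU => ?_
  rw [← image_eq_preimage_of_inverse (leftInverse_invFun hbij.injective)
    (rightInverse_invFun hbij.surjective)]
  exact hopen U hU

lemma continuous_invFun_of_hasDerivAt (hbij : Bijective f) (hderiv : ∀ x, HasDerivAt f (f' x) x)
    (hf' : Continuous f') (hne : ∀ x, f' x ≠ 0) : Continuous (invFun f) :=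
  continuous_invFun_of_isOpenMap hbij <| isOpenMap_of_hasStrictDerivAt (fun _ =>
    hasStrictDerivAt_of_hasDerivAt_of_continuousAt (.of_forall hderiv) hf'.continuousAt) hne

lemma deriv_invFun (hbij : Bijective f) (hderiv : ∀ x, HasDerivAt f (f' x) x)
    (hf' : Continuous f') (hne : ∀ x, f' x ≠ 0) (x : ℝ) :
    deriv (invFun f) x = (f' (invFun f x))⁻¹ :=
  (HasDerivAt.of_local_left_inverse
    (continuous_invFun_of_hasDerivAt hbij hderiv hf' hne).continuousAt (hderiv _) (hne _)
    (.of_forall (rightInverse_invFun hbij.surjective))).deriv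

lemma abs_le_abs_mul_exp {a b t : ℝ} (hm : 0 < m) (hb : m ≤ |b|) (hab : |a - b| ≤ t) :
    |a| ≤ |b| * Real.exp (t / m) := by
  have ht : 0 ≤ t / m := div_nonneg ((abs_nonneg _).trans hab) hm.le
  calc |a| ≤ |a - b| + |b| := by simpa using abs_add_le (a - b) b
    _ ≤ m * (t / m) + |b| := by rw [mul_div_cancel₀ _ hm.ne']; gcongr
    _ ≤ |b| * (t / m) + |b| := by gcongr
    _ = |b| * (t / m + 1) := by ring
    _ ≤ |b| * Real.exp (t / m) := by gcongr; exact Real.add_one_le_exp _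

lemma abs_sub_le_mul_exp_of_holder (hderiv : ∀ x, HasDerivAt f (f' x) x) (hε : 0 ≤ ε)
    (hCh : 0 ≤ Ch) (hholder : ∀ x y, |f' x - f' y| ≤ Ch * |x - y| ^ ε) (hm : 0 < m) {I : Set ℝ}
    (hI : I.OrdConnected) (hmI : ∀ x ∈ I, m ≤ |f' x|) {x y z D : ℝ} (hy : y ∈ I) (hz : z ∈ I)
    (hyx : |y - x| ≤ D) (hzx : |z - x| ≤ D) :
    |f' x| * |y - z| ≤ |f y - f z| * Real.exp (Ch / m * D ^ ε) := by
  obtain ⟨ξ, hξ, hslope⟩ := exists_abs_sub_eq_abs_deriv_mul hderiv y z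
  have hxξ : |x - ξ| ≤ D := by
    have hball : uIcc y z ⊆ closedBall x D :=
      (convex_closedBall x D).ordConnected.uIcc_subset hyx hzx
    simpa [dist_comm, Real.dist_eq, abs_sub_comm] using hball hξ
  have hf'x : |f' x| ≤ |f' ξ| * Real.exp (Ch * D ^ ε / m) :=
    abs_le_abs_mul_exp hm (hmI ξ (hI.uIcc_subset hy hz hξ))
      ((hholder x ξ).trans (by gcongr))
  calc |f' x| * |y - z| ≤ |f' ξ| * Real.exp (Ch * D ^ ε / m) * |y - z| := by gcongr
    _ = |f y - f z| * Real.exp (Ch / m * D ^ ε) := by rw [hslope, mul_div_right_comm]; ring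

lemma lipschitzOnWith_invFun (hsurj : Surjective f) (hderiv : ∀ x, HasDerivAt f (f' x) x)
    (hm : 0 < m) {I : Set ℝ} (hI : I.OrdConnected) (hmI : ∀ x ∈ I, m ≤ |f' x|)
    (hKI : MapsTo (invFun f) K I) : LipschitzOnWith m⁻¹.toNNReal (invFun f) K := by
  refine LipschitzOnWith.of_dist_le_mul fun y hy z hz => ?_
  obtain ⟨ξ, hξ, hslope⟩ := exists_abs_sub_eq_abs_deriv_mul hderiv (invFun f y) (invFun f z)
  rw [rightInverse_invFun hsurj y, rightInverse_invFun hsurj z] at hslope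
  rw [Real.coe_toNNReal _ (inv_nonneg.2 hm.le), Real.dist_eq, Real.dist_eq, hslope,
    le_inv_mul_iff₀ hm]
  gcongr
  exact hmI ξ (hI.uIcc_subset (hKI hy) (hKI hz) hξ)

lemma abs_invFun_sub_le_mul_exp (hbij : Bijective f) (hderiv : ∀ x, HasDerivAt f (f' x) x)
    (hf' : Continuous f') (hne : ∀ x, f' x ≠ 0) (hε : 0 ≤ ε) (hCh : 0 ≤ Ch)
    (hholder : ∀ x y, |f' x - f' y| ≤ Ch * |x - y| ^ ε) (hm : 0 < m) {I : Set ℝ}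
    (hI : I.OrdConnected) (hmI : ∀ x ∈ I, m ≤ |f' x|) {x y z D : ℝ} (hy : invFun f y ∈ I)
    (hz : invFun f z ∈ I) (hyx : |invFun f y - invFun f x| ≤ D)
    (hzx : |invFun f z - invFun f x| ≤ D) :
    |invFun f y - invFun f z| ≤
      |deriv (invFun f) x| * |y - z| * Real.exp (Ch / m * D ^ ε) := by
  have hdist := abs_sub_le_mul_exp_of_holder hderiv hε hCh hholder hm hI hmI hy hz hyx hzx
  rw [rightInverse_invFun hbij.surjective y, rightInverse_invFun hbij.surjective z] at hdist
  rwa [deriv_invFun hbij hderiv hf' hne, abs_inv, mul_assoc, le_inv_mul_iff₀ (abs_pos.2 (hne _))]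

lemma exists_pos_forall_le_abs_of_isCompact {ι X : Type*} [Finite ι] [TopologicalSpace X]
    {K : Set X} (hK : IsCompact K) {h : ι → X → ℝ} (hh : ∀ j, Continuous (h j))
    (hne : ∀ j x, h j x ≠ 0) : ∃ m, 0 < m ∧ ∀ j, ∀ x ∈ K, m ≤ |h j x| := by
  have hsmall : ∀ᶠ m in 𝓝[>] (0 : ℝ), ∀ j, ∀ x ∈ K, m ≤ |h j x| := by
    refine Filter.eventually_all.2 fun j => ?_
    obtain ⟨c, hc, hcK⟩ := hK.exists_forall_le' (hh j).abs.continuousOn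
      fun x _ => abs_pos.2 (hne j x)
    filter_upwards [Ioc_mem_nhdsGT hc] with m hm x hx using hm.2.trans (hcK x hx)
  exact (eventually_mem_nhdsWithin.and hsmall).exists

lemma exists_mapsTo_closedBall {ι X Y : Type*} [Finite ι] [TopologicalSpace X]
    [PseudoMetricSpace Y] {K : Set X} (hK : IsCompact K) {g : ι → X → Y}
    (hg : ∀ j, Continuous (g j)) (y : Y) : ∃ R, ∀ j, MapsTo (g j) K (closedBall y R) := by
  obtain ⟨R, hR⟩ := (isCompact_iUnion fun j => hK.image (hg j)).isBounded.subset_closedBall y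
  exact ⟨R, fun j x hx => hR (mem_iUnion_of_mem j (mem_image_of_mem _ hx))⟩

theorem exists_hasBoundedDistortion_invFun {ι : Type*} [Finite ι] {f f' : ι → ℝ → ℝ}
    (hbij : ∀ j, Bijective (f j)) (hderiv : ∀ j x, HasDerivAt (f j) (f' j x) x)
    (hne : ∀ j x, f' j x ≠ 0) (hle : ∀ j x, |f' j x| ≤ lam) (hε : 0 < ε)
    (hholder : ∀ j x y, |f' j x - f' j y| ≤ Ch * |x - y| ^ ε) (hK : IsCompact K) :
    ∃ κ B, 0 ≤ B ∧ HasBoundedDistortion f (fun j => invFun (f j))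
      (fun j x => |deriv (invFun (f j)) x|) K lam.toNNReal κ B ε := by
  have hf' : ∀ j, Continuous (f' j) := fun j => continuous_of_dist_le_mul_rpow hε (hholder j)
  obtain ⟨R, hR⟩ := exists_mapsTo_closedBall hK
    (fun j => continuous_invFun_of_hasDerivAt (hbij j) (hderiv j) (hf' j) (hne j)) 0
  obtain ⟨m, hm, hmR⟩ :=
    exists_pos_forall_le_abs_of_isCompact (isCompact_closedBall (0 : ℝ) R) hf' hne
  have hI : (closedBall (0 : ℝ) R).OrdConnected := (convex_closedBall 0 R).ordConnected
  have hholder' : ∀ j x y, |f' j x - f' j y| ≤ |Ch| * |x - y| ^ ε := fun j x y =>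
    (hholder j x y).trans (by gcongr; exact le_abs_self Ch)
  exact ⟨m⁻¹.toNNReal, |Ch| / m, by positivity,
    { leftInverse := fun j => leftInverse_invFun (hbij j).injective
      rightInverse := fun j => rightInverse_invFun (hbij j).surjective
      lipschitzWith := fun j => lipschitzWith_toNNReal_of_abs_deriv_le (hderiv j) (hle j)
      lipschitzOnWith_inv := fun j =>
        lipschitzOnWith_invFun (hbij j).surjective (hderiv j) hm hI (hmR j) (hR j)
      scale_nonneg := fun _ _ => abs_nonneg _
      dist_inv_le := fun j _ _ _ hy _ hz _ => abs_invFun_sub_le_mul_exp (hbij j) (hderiv j)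
        (hf' j) (hne j) hε.le (abs_nonneg Ch) (hholder' j) hm hI (hmR j) (hR j hy) (hR j hz) }⟩

lemma deriv_invFun_nonneg (hbij : Bijective f) (hderiv : ∀ x, HasDerivAt f (f' x) x)
    (hf' : Continuous f') (hpos : ∀ x, 0 < f' x) (x : ℝ) : 0 ≤ deriv (invFun f) x := by
  rw [deriv_invFun hbij hderiv hf' fun y => (hpos y).ne']
  exact inv_nonneg.2 (hpos _).le

theorem certificate_D1_general {ι : Type*} [Fintype ι] {J : Set ℝ} (hJ : IsCompact J)
    (hJne : J.Nonempty) (hε : 0 < ε) (hlam : lam < 1) {f f' : ι → ℝ → ℝ}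
    (hbij : ∀ j, Bijective (f j)) (hderiv : ∀ j x, HasDerivAt (f j) (f' j x) x)
    (hne : ∀ j x, f' j x ≠ 0) (hle : ∀ j x, |f' j x| ≤ lam)
    (hholder : ∀ j x y, |f' j x - f' j y| ≤ Ch * |x - y| ^ ε) (hmaps : ∀ j, MapsTo (f j) J J)
    {p : ι → ℝ} (hp : ∀ j, 0 ≤ p j) (hpsum : ∑ j, p j = 1) {μ : Measure ℝ} [IsFiniteMeasure μ]
    (hμ : IsStationaryMeasure p f μ) {α r θ M : ℝ} (hα : 0 ≤ α) (hr : 0 < r) (hθ : 0 < θ)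
    {ψ : ℝ → ℝ} (hψ : ∀ x ∉ cthickening r J, 0 ≤ ψ x)
    (hψb : ∀ x ∈ cthickening r J, θ ≤ ψ x ∧ ψ x ≤ M)
    (hcontr : ∀ x ∈ cthickening r J, asymmetricDiffusion p (fun j => invFun (f j))
      (fun j x => |deriv (invFun (f j)) x|) α ψ x ≤ ψ x) :
    IsAlphaRegular μ α := by
  have hψ0 : ∀ x, 0 ≤ ψ x := fun x =>
    (em (x ∈ cthickening r J)).elim (fun hx => hθ.le.trans (hψb x hx).1) (hψ x)
  obtain ⟨κ, B, hB, hdist⟩ :=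
    exists_hasBoundedDistortion_invFun hbij hderiv hne hle hε hholder (hJ.cthickening (r := r))
  obtain ⟨C, hC⟩ := hdist.exists_measureReal_le_mul_diam_rpow (Real.toNNReal_lt_one.2 hlam) hB hε
    hJ.isClosed hJne hmaps hp hpsum hμ hα hr hθ hψ0 hψb hcontr
  refine isAlphaRegular_of_forall_le (C := C * 2 ^ α) hα (half_pos hr) fun x ρ hρ hρr => ?_
  have hdiam : diam (closedBall x ρ) = 2 * ρ := by
    rw [Real.closedBall_eq_Icc, Real.diam_Icc (by linarith)]
    ring
  have := hC (closedBall x ρ) measurableSet_closedBall isBounded_closedBall (by linarith)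
    (by linarith)
  rwa [hdiam, Real.mul_rpow zero_le_two hρ.le, ← mul_assoc] at this

end RealLine

/-- Theorem (certificate for `α`-regularity): for an iterated function scheme of uniformly
contracting `C^{1+ε}` orientation-preserving diffeomorphisms preserving a compact interval
`J = [a,b]`, if a positive test function `ψ` supported on the closed `r`-neighbourhood
`B_r(J)` is strictly decreased there by the asymmetric diffusion operator
`D^{(1)}_{α,T}`, then the stationary measure `μ` is `α`-regular:
`μ(B_ρ(x)) ≤ C ρ^α` for all `x` and `ρ > 0`. -/
theorem certificate_D1 (n : ℕ) (a b : ℝ) (hab : a ≤ b)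
    (ε lamMax : ℝ) (hε : 0 < ε) (hlam : lamMax < 1)
    (f : Fin n → ℝ → ℝ) (f' : Fin n → ℝ → ℝ)
    (hbij : ∀ j, Function.Bijective (f j))
    (hderiv : ∀ j x, HasDerivAt (f j) (f' j x) x)
    (hpos : ∀ j x, 0 < f' j x)
    (hle : ∀ j x, f' j x ≤ lamMax)
    (Ch : ℝ) (hholder : ∀ j x y, |f' j x - f' j y| ≤ Ch * |x - y| ^ ε)
    (hmaps : ∀ j, ∀ x ∈ Set.Icc a b, f j x ∈ Set.Icc a b)
    (p : Fin n → ℝ) (hp : ∀ j, 0 < p j) (hpsum : ∑ j, p j = 1)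
    (μ : Measure ℝ) [IsProbabilityMeasure μ]
    (hμ : μ = ∑ j, ENNReal.ofReal (p j) • Measure.map (f j) μ)
    (α r θ : ℝ) (hα : 0 < α) (hr : 0 < r) (hθ : 0 < θ)
    (ψ : ℝ → ℝ)
    (hψ0 : ∀ x ∉ Metric.cthickening r (Set.Icc a b), ψ x = 0)
    (hψb : ∀ x ∈ Metric.cthickening r (Set.Icc a b), θ ≤ ψ x ∧ ψ x ≤ θ⁻¹)
    (hcontr : ∀ x ∈ Metric.cthickening r (Set.Icc a b),
      ∑ j, p j * (deriv (Function.invFun (f j)) x) ^ α * ψ (Function.invFun (f j) x)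
        < ψ x) :
    ∃ C : ℝ, 0 < C ∧ ∀ (x ρ : ℝ), 0 < ρ →
      μ (Metric.closedBall x ρ) ≤ ENNReal.ofReal (C * ρ ^ α) :=
  have hinv : ∀ j x, 0 ≤ deriv (invFun (f j)) x := fun j => deriv_invFun_nonneg (hbij j) (hderiv j)
    (continuous_of_dist_le_mul_rpow hε (hholder j)) (hpos j)
  certificate_D1_general isCompact_Icc (nonempty_Icc.2 hab) hε hlam hbij hderiv
    (fun j x => (hpos j x).ne') (fun j x => (abs_of_pos (hpos j x)).trans_le (hle j x)) hholder
    hmaps (fun j => (hp j).le) hpsum hμ hα.le hr hθ (fun x hx => (hψ0 x hx).ge) hψb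
    fun x hx => by simpa only [asymmetricDiffusion, abs_of_nonneg (hinv _ _)] using (hcontr x hx).le
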